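/- Let S be a finite simplicial complex and let f, g : S → ℝⁿ be monotonic maps (i.e., f(τ₁) ≤ f(τ₂) coordinatewise whenever τ₁ ⊆ τ₂ ∈ S, and likewise for g). Define the Euler decomposition signed measures μ_χ(f) = Σ_{τ ∈ S} (−1)^{dim(τ)} δ_{f(τ)} and μ_χ(g) = Σ_{τ ∈ S} (−1)^{dim(τ)} δ_{g(τ)}, where dim(τ) = |τ| − 1. Then ‖μ_χ(f) − μ_χ(g)‖_1^KR ≤ Σ_{τ ∈ S} ‖f(τ) − g(τ)‖_1. -/

import Mathlib

open MeasureTheory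

noncomputable def lpnorm (p : ENNReal) {n : ℕ} (v : Fin n → ℝ) : ℝ :=
  ‖(WithLp.equiv p (Fin n → ℝ)).symm v‖

noncomputable def KRgen {E : Type*} [MeasurableSpace E] (cost : E → E → ENNReal)
    (μ : SignedMeasure E) : ENNReal :=
  ⨅ (ψ : Measure (E × E)) (_ : ψ.map Prod.fst = μ.toJordanDecomposition.posPart ∧
      ψ.map Prod.snd = μ.toJordanDecomposition.negPart),
    ∫⁻ w, cost w.1 w.2 ∂ψ

noncomputable def KRnorm (p : ENNReal) {n : ℕ} (μ : SignedMeasure (Fin n → ℝ)) : ENNReal :=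
  KRgen (fun x y => ENNReal.ofReal (lpnorm p (x - y))) μ

noncomputable def KRnormR (μ : SignedMeasure ℝ) : ENNReal :=
  KRgen (fun x y => ENNReal.ofReal |x - y|) μ

/-- A finite simplicial complex on a finite vertex set V: a finite collection of nonempty
finite subsets of V, containing all singletons and closed under taking nonempty subsets. -/
structure FinSimplicialComplex (V : Type*) [DecidableEq V] [Fintype V] where
  faces : Finset (Finset V)
  nonempty_of_mem : ∀ τ ∈ faces, τ.Nonempty
  singleton_mem : ∀ v : V, {v} ∈ faces
  down_closed : ∀ τ ∈ faces, ∀ σ, σ ⊆ τ → σ.Nonempty → σ ∈ faces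

/-- The Euler decomposition signed measure μ_χ(f) = Σ_{τ ∈ S} (−1)^{dim τ} δ_{f(τ)}. -/
noncomputable def eulerDecompSM {V : Type*} [DecidableEq V] [Fintype V] {n : ℕ}
    (C : FinSimplicialComplex V) (f : Finset V → (Fin n → ℝ)) :
    SignedMeasure (Fin n → ℝ) :=
  ∑ τ ∈ C.faces, ((-1 : ℤ) ^ (τ.card - 1)) • (Measure.dirac (f τ)).toSignedMeasure

/-!
A discrete transport plan is a multiset of pairs `(x, y)`, each moving a unit mass from `x` to `y`.
Up to orienting each pair by the sign of `τ`, the pairs `(f τ, g τ)` form a plan whose marginals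
have difference `μ_χ(f) - μ_χ(g)`. It need not be a coupling of the Jordan parts, since a point
may occur both as a source and as a target. At such a point `y`, the pairs `(x, y)` and `(y, z)`
can be replaced by `(x, z)`, and a pair `(y, y)` can be dropped; neither changes the signed measure,
and by the triangle inequality neither increases the cost. Once no such point is left,
the two marginals are mutually singular, so they are the Jordan parts.
-/

section DiracSum

variable {E F : Type*} [MeasurableSpace E] [MeasurableSpace F]

/-- The sum of the Dirac masses at the points of a multiset, counted with multiplicity. Discrete
transport plans on `E × E` and their marginals on `E` are of this form. -/
noncomputable def diracSum (m : Multiset E) : Measure E :=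
  (m.map Measure.dirac).sum

@[simp]
lemma diracSum_zero : diracSum (0 : Multiset E) = 0 := by
  simp [diracSum]

@[simp]
lemma diracSum_cons (a : E) (m : Multiset E) :
    diracSum (a ::ₘ m) = Measure.dirac a + diracSum m := by
  simp [diracSum]

instance isFiniteMeasure_diracSum (m : Multiset E) : IsFiniteMeasure (diracSum m) := by
  induction m using Multiset.induction_on with
  | empty => rw [diracSum_zero]; infer_instance
  | cons a m ih => rw [diracSum_cons]; infer_instance

lemma diracSum_apply_eq_zero {m : Multiset E} {s : Set E} (hs : MeasurableSet s)
    (h : ∀ x ∈ m, x ∉ s) : diracSum m s = 0 := by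
  induction m using Multiset.induction_on with
  | empty => simp
  | cons a m ih =>
    obtain ⟨ha, hm⟩ := Multiset.forall_mem_cons.1 h
    simp [Measure.dirac_apply' _ hs, ha, ih hm]

lemma diracSum_mutuallySingular_of_disjoint [MeasurableSingletonClass E] {s t : Multiset E}
    (h : Disjoint s t) : diracSum s ⟂ₘ diracSum t := by
  have ht : MeasurableSet {x | x ∈ t} := t.finite_toSet.measurableSet
  exact ⟨_, ht, diracSum_apply_eq_zero ht fun _ hx ↦ Multiset.disjoint_left.1 h hx,
    diracSum_apply_eq_zero ht.compl fun _ hx ↦ not_not_intro hx⟩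

lemma map_diracSum {φ : E → F} (hφ : Measurable φ) (m : Multiset E) :
    (diracSum m).map φ = diracSum (m.map φ) := by
  induction m using Multiset.induction_on with
  | empty => simp
  | cons a m ih => simp [Measure.map_add _ _ hφ, Measure.map_dirac' hφ, ih]

lemma lintegral_diracSum [MeasurableSingletonClass E] (u : E → ENNReal) (m : Multiset E) :
    ∫⁻ x, u x ∂diracSum m = (m.map u).sum := by
  induction m using Multiset.induction_on with
  | empty => simp
  | cons a m ih => simp [lintegral_add_measure, ih]

end DiracSum

section Dipole

variable {E : Type*} [MeasurableSpace E]

/-- The elementary signed measure `δ_x - δ_y`: the difference of the marginals of a transport plan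
that moves a unit mass from `x` to `y`. -/
noncomputable def dipole (x y : E) : SignedMeasure E :=
  (Measure.dirac x).toSignedMeasure - (Measure.dirac y).toSignedMeasure

lemma dipole_self (x : E) : dipole x x = 0 := sub_self _

lemma neg_dipole (x y : E) : -dipole x y = dipole y x := neg_sub _ _

lemma dipole_add_dipole (x y z : E) : dipole x y + dipole y z = dipole x z :=
  sub_add_sub_cancel _ _ _

lemma sum_dipole_eq_sub (M : Multiset (E × E)) :
    (M.map fun w ↦ dipole w.1 w.2).sum =
      (diracSum (M.map Prod.fst)).toSignedMeasure
        - (diracSum (M.map Prod.snd)).toSignedMeasure := by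
  induction M using Multiset.induction_on with
  | empty => simp
  | cons w M ih =>
    rw [Multiset.map_cons, Multiset.sum_cons, ih, dipole]
    simp only [Multiset.map_cons, diracSum_cons, Measure.toSignedMeasure_add]
    abel

end Dipole

section Transport

variable {E : Type*} [MeasurableSpace E] {c : E → E → ENNReal}

lemma KRgen_sum_dipole_le_of_disjoint [MeasurableSingletonClass E] {M : Multiset (E × E)}
    (hM : Disjoint (M.map Prod.fst) (M.map Prod.snd)) :
    KRgen c (M.map fun w ↦ dipole w.1 w.2).sum ≤ (M.map fun w ↦ c w.1 w.2).sum := by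
  let j : JordanDecomposition E :=
    ⟨diracSum (M.map Prod.fst), diracSum (M.map Prod.snd),
      diracSum_mutuallySingular_of_disjoint hM⟩
  have hj : (M.map fun w ↦ dipole w.1 w.2).sum.toJordanDecomposition = j :=
    SignedMeasure.toJordanDecomposition_eq (sum_dipole_eq_sub M)
  have hψ : (diracSum M).map Prod.fst = j.posPart ∧ (diracSum M).map Prod.snd = j.negPart :=
    ⟨map_diracSum measurable_fst M, map_diracSum measurable_snd M⟩
  rw [KRgen, hj, ← lintegral_diracSum]
  exact iInf₂_le (diracSum M) hψ

lemma exists_shorter_plan_of_not_disjoint (hc : ∀ x y z, c x z ≤ c x y + c y z)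
    {M : Multiset (E × E)} (hM : ¬Disjoint (M.map Prod.fst) (M.map Prod.snd)) :
    ∃ N : Multiset (E × E), N.card < M.card ∧
      (N.map fun w ↦ dipole w.1 w.2).sum = (M.map fun w ↦ dipole w.1 w.2).sum ∧
      (N.map fun w ↦ c w.1 w.2).sum ≤ (M.map fun w ↦ c w.1 w.2).sum := by
  simp only [Multiset.disjoint_map_map, not_forall, not_not] at hM
  obtain ⟨⟨y, z⟩, hyz, ⟨x, y'⟩, hxy, hy : y = y'⟩ := hM
  subst hy
  obtain ⟨M, rfl⟩ := Multiset.exists_cons_of_mem hyz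
  rcases Multiset.mem_cons.1 hxy with hloop | hxy
  · obtain ⟨rfl, rfl⟩ := Prod.mk.inj hloop
    exact ⟨M, by simp, by simp [dipole_self], by simp⟩
  · obtain ⟨N, rfl⟩ := Multiset.exists_cons_of_mem hxy
    refine ⟨(x, z) ::ₘ N, by simp, ?_, ?_⟩
    · simp only [Multiset.map_cons, Multiset.sum_cons, ← dipole_add_dipole x y z]
      abel
    · simp only [Multiset.map_cons, Multiset.sum_cons]
      calc c x z + (N.map fun w ↦ c w.1 w.2).sum
          ≤ (c x y + c y z) + (N.map fun w ↦ c w.1 w.2).sum := by gcongr; exact hc x y z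
        _ = c y z + (c x y + (N.map fun w ↦ c w.1 w.2).sum) := by ring

theorem KRgen_sum_dipole_le [MeasurableSingletonClass E]
    (hc : ∀ x y z, c x z ≤ c x y + c y z) (M : Multiset (E × E)) :
    KRgen c (M.map fun w ↦ dipole w.1 w.2).sum ≤ (M.map fun w ↦ c w.1 w.2).sum := by
  induction hk : M.card using Nat.strong_induction_on generalizing M with
  | _ k ih =>
    by_cases hM : Disjoint (M.map Prod.fst) (M.map Prod.snd)
    · exact KRgen_sum_dipole_le_of_disjoint hM
    · obtain ⟨N, hcard, hdipole, hcost⟩ := exists_shorter_plan_of_not_disjoint hc hM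
      rw [← hdipole]
      exact (ih N.card (hk ▸ hcard) N rfl).trans hcost

theorem KRgen_sum_units_smul_dipole_le [MeasurableSingletonClass E]
    (hc : ∀ x y z, c x z ≤ c x y + c y z) (hc_symm : ∀ x y, c x y = c y x)
    {ι : Type*} (s : Finset ι) (ε : ι → ℤˣ) (f g : ι → E) :
    KRgen c (∑ i ∈ s, ε i • dipole (f i) (g i)) ≤ ∑ i ∈ s, c (f i) (g i) := by
  have exists_oriented (i : ι) : ∃ w : E × E,
      ε i • dipole (f i) (g i) = dipole w.1 w.2 ∧ c (f i) (g i) = c w.1 w.2 := by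
    rcases Int.units_eq_one_or (ε i) with h | h
    · exact ⟨(f i, g i), by simp [h], rfl⟩
    · exact ⟨(g i, f i), by simp [h, neg_dipole, Units.smul_def], hc_symm _ _⟩
  choose w hdipole hcost using exists_oriented
  simpa only [hdipole, hcost, Multiset.map_map, Function.comp_def, Finset.sum_map_val]
    using KRgen_sum_dipole_le hc (s.val.map w)

end Transport

section Lpnorm

variable {p : ENNReal} [Fact (1 ≤ p)] {n : ℕ}

lemma lpnorm_nonneg (v : Fin n → ℝ) : 0 ≤ lpnorm p v :=
  norm_nonneg (WithLp.toLp p v)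

lemma lpnorm_sub_comm (x y : Fin n → ℝ) : lpnorm p (x - y) = lpnorm p (y - x) :=
  norm_sub_rev (WithLp.toLp p x) (WithLp.toLp p y)

lemma lpnorm_sub_le_add (x y z : Fin n → ℝ) :
    lpnorm p (x - z) ≤ lpnorm p (x - y) + lpnorm p (y - z) :=
  norm_sub_le_norm_sub_add_norm_sub
    (WithLp.toLp p x) (WithLp.toLp p y) (WithLp.toLp p z)

theorem KRnorm_sum_units_smul_dipole_le {ι : Type*} (s : Finset ι) (ε : ι → ℤˣ)
    (f g : ι → Fin n → ℝ) :
    KRnorm p (∑ i ∈ s, ε i • dipole (f i) (g i))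
      ≤ ENNReal.ofReal (∑ i ∈ s, lpnorm p (f i - g i)) := by
  rw [ENNReal.ofReal_sum_of_nonneg fun i _ ↦ lpnorm_nonneg (f i - g i)]
  refine KRgen_sum_units_smul_dipole_le (fun x y z ↦ ?_) (fun x y ↦ ?_) s ε f g
  · rw [← ENNReal.ofReal_add (lpnorm_nonneg _) (lpnorm_nonneg _)]
    exact ENNReal.ofReal_le_ofReal (lpnorm_sub_le_add x y z)
  · rw [lpnorm_sub_comm]

end Lpnorm

lemma eulerDecompSM_sub_eq_sum_dipole {V : Type*} [DecidableEq V] [Fintype V] {n : ℕ}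
    (C : FinSimplicialComplex V) (f g : Finset V → (Fin n → ℝ)) :
    eulerDecompSM C f - eulerDecompSM C g =
      ∑ τ ∈ C.faces, ((-1 : ℤˣ) ^ (τ.card - 1)) • dipole (f τ) (g τ) := by
  simp [eulerDecompSM, dipole, Units.smul_def, smul_sub]

theorem euler_decomposition_signed_measure_stability_general
    {V : Type*} [DecidableEq V] [Fintype V] {n : ℕ} {p : ENNReal} [Fact (1 ≤ p)]
    (C : FinSimplicialComplex V) (f g : Finset V → (Fin n → ℝ)) :
    KRnorm p (eulerDecompSM C f - eulerDecompSM C g)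
      ≤ ENNReal.ofReal (∑ τ ∈ C.faces, lpnorm p (f τ - g τ)) := by
  rw [eulerDecompSM_sub_eq_sum_dipole]
  exact KRnorm_sum_units_smul_dipole_le _ _ f g

/-- stability of the Euler decomposition signed measure: for monotonic
filtrations f, g of a finite simplicial complex,
‖μ_χ(f) − μ_χ(g)‖₁^KR ≤ Σ_{τ ∈ S} ‖f(τ) − g(τ)‖₁. -/
theorem euler_decomposition_signed_measure_stability
    {V : Type*} [DecidableEq V] [Fintype V] {n : ℕ}
    (C : FinSimplicialComplex V) (f g : Finset V → (Fin n → ℝ))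
    (hf : ∀ τ₁ ∈ C.faces, ∀ τ₂ ∈ C.faces, τ₁ ⊆ τ₂ → f τ₁ ≤ f τ₂)
    (hg : ∀ τ₁ ∈ C.faces, ∀ τ₂ ∈ C.faces, τ₁ ⊆ τ₂ → g τ₁ ≤ g τ₂) :
    KRnorm 1 (eulerDecompSM C f - eulerDecompSM C g)
      ≤ ENNReal.ofReal (∑ τ ∈ C.faces, lpnorm 1 (f τ - g τ)) :=
  euler_decomposition_signed_measure_stability_general C f g
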